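/- Fix real numbers q and s with 0 < q < 1 and 0 < s < 1 and set t = s². For all integers m, n ≥ 0, the q-Gauss integral formula for Rogers polynomials of type A₁ holds: (1/2π) ∫₀^{2π} P_m(e^{iφ}; q, t) · P_n(e^{iφ}; q, t) · θ(e^{iφ}) · μ(e^{iφ}; q, t) dφ = q^{(m² + n²)/4} · s^{m+n} · P_n(s q^{m/2}; q, t) · P_m(s; q, t) · ∏_{j=1}^∞ (1 − t qʲ)/(1 − t² qʲ). (Formula (3.4) of the paper in the rank-one case.) -/

import Mathlib

/-!
Write `⟨f⟩` for the mean of `f` over the unit circle against the theta function `θ` times the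
Macdonald weight `μ`, and let `C_n` be the Rogers polynomial rescaled to its `q`-ultraspherical
normalization. Two symmetries of `θ μ` drive the computation. First, `θ` is even and `μ` is
`(1 - x²) / (1 - t x²)` times an even factor under `x ↦ x⁻¹`, so `(1 + t) ⟨f⟩` is `⟨g⟩`, where `g`
is the Macdonald symmetrization of `f`. Secondly, moving the contour to radius `√q` gives
`⟨x f(x)⟩ = q^{1/4} ⟨f(√q x⁻¹)⟩`.

Symmetrizing `C_m(√q x⁻¹)` returns a multiple of `C_m` (Macdonald's eigenvalue equation), and
symmetrizing `x C_n(√q x⁻¹)` gives a combination of `C_{n+1}` and `C_{n-1}`. Playing both off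
against the integral of `C_m(√q x⁻¹) C_n(x)` yields a three-term recurrence in `n` for
`⟨C_m C_n⟩`, which is the Pieri rule for `C_n` evaluated at `s q^{m/2}`. Hence `⟨C_m C_n⟩` is an
explicit multiple of `⟨C_m⟩`, and the case of `⟨C_0 C_m⟩` evaluates `⟨C_m⟩` in terms of `⟨1⟩`.

The same symmetries express the total mass `⟨1⟩` at parameter `t q` through that at `t`; its
quotient by the claimed product is therefore constant along `t qᴺ → 0`, and comparing with
`t = q`, where `μ` is a Laurent polynomial, shows that the constant is `1`.
-/

open scoped BigOperators
open Filter

noncomputable section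

/-- Symmetric monomial `M_r(X) = X^r + X^{-r}` for `r ≥ 1`, `M_0 = 1`. -/
def Msym (r : ℕ) (X : ℂ) : ℂ := if r = 0 then 1 else X ^ r + X⁻¹ ^ r

/-- Continuous q-Hermite Laurent polynomial (Macdonald polynomial of type A₁ at t = 0). -/
def PbarA1 (q : ℝ) (n : ℕ) (X : ℂ) : ℂ :=
  Msym n X + ∑ j ∈ Finset.Icc 1 (n / 2),
    (∏ i ∈ Finset.range j, (1 - (q : ℂ) ^ (n - i)) / (1 - (q : ℂ) ^ (i + 1))) *
      Msym (n - 2 * j) X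

/-- Global q-Whittaker function of type A₁. -/
def whitA1 (q : ℝ) (X Λ : ℂ) : ℂ :=
  ∑' n : ℕ, ((q ^ ((n : ℝ) ^ 2 / 4) : ℝ) : ℂ) * X ^ n * PbarA1 q n Λ /
    ∏ j ∈ Finset.Icc 1 n, (1 - (q : ℂ) ^ j)

/-- Theta function `θ(Λ) = ∑_{j ∈ ℤ} q^{j²/4} Λ^j`. -/
def thetaA1 (q : ℝ) (Λ : ℂ) : ℂ :=
  ∑' j : ℤ, ((q ^ ((j : ℝ) ^ 2 / 4) : ℝ) : ℂ) * Λ ^ j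

/-- Rogers Laurent polynomial (symmetric Macdonald polynomial of type A₁). -/
def RogersA1 (q : ℝ) (t : ℂ) (n : ℕ) (X : ℂ) : ℂ :=
  Msym n X + ∑ j ∈ Finset.Icc 1 (n / 2),
    (∏ i ∈ Finset.range j,
      ((1 - (q : ℂ) ^ (n - i)) * (1 - t * (q : ℂ) ^ i)) /
      ((1 - (q : ℂ) ^ (1 + i)) * (1 - t * (q : ℂ) ^ (n - i - 1)))) *
    Msym (n - 2 * j) X

/-- Global q,t-spherical function of type A₁, with `t = s²`. -/
def sphA1 (q s : ℝ) (X Λ : ℂ) : ℂ :=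
  ∑' n : ℕ, (s : ℂ) ^ n * ((q ^ ((n : ℝ) ^ 2 / 4) : ℝ) : ℂ) *
    RogersA1 q ((s : ℂ) ^ 2) n X * RogersA1 q ((s : ℂ) ^ 2) n Λ *
    ∏ i ∈ Finset.range n,
      ((1 - (s : ℂ) ^ 2 * (q : ℂ) ^ i) * (1 - (s : ℂ) ^ 2 * (q : ℂ) ^ (i + 1))) /
      ((1 - ((s : ℂ) ^ 2) ^ 2 * (q : ℂ) ^ i) * (1 - (q : ℂ) ^ (i + 1)))

/-- Macdonald truncated theta weight function of type A₁. -/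
def muA1 (q : ℝ) (t : ℂ) (X : ℂ) : ℂ :=
  ∏' j : ℕ, ((1 - X ^ 2 * (q : ℂ) ^ j) * (1 - X⁻¹ ^ 2 * (q : ℂ) ^ (j + 1))) /
    ((1 - t * X ^ 2 * (q : ℂ) ^ j) * (1 - t * X⁻¹ ^ 2 * (q : ℂ) ^ (j + 1)))

section Polynomials

open Finset.HasAntidiagonal (antidiagonal)

variable {K : Type*} [Field K]

/-- The ratio `(t; q)_k / (q; q)_k` of finite `q`-Pochhammer symbols. -/
def rogersWeight (q t : K) (k : ℕ) : K :=
  ∏ i ∈ Finset.range k, (1 - t * q ^ i) / (1 - q ^ (i + 1))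

/-- The continuous `q`-ultraspherical polynomial in homogeneous form: the coefficient of `zⁿ` in
`(tXz; q)_∞ (tYz; q)_∞ / ((Xz; q)_∞ (Yz; q)_∞)`. -/
def ultrasphericalForm (q t : K) (n : ℕ) (X Y : K) : K :=
  ∑ ij ∈ antidiagonal n,
    rogersWeight q t ij.1 * rogersWeight q t ij.2 * (X ^ ij.1 * Y ^ ij.2)

/-- The continuous `q`-ultraspherical polynomial `C_n(x; t | q)` at `2x = X + X⁻¹`. It is the Rogers
polynomial rescaled by `rogersWeight q t n`, which clears all denominators depending on `t`. -/
def ultraspherical (q t : K) (n : ℕ) (X : K) : K :=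
  ultrasphericalForm q t n X X⁻¹

section Coefficients

variable {q t : K}

lemma rogersWeight_zero : rogersWeight q t 0 = 1 := by
  simp [rogersWeight]

lemma one_sub_pow_mul_rogersWeight_succ (hq : ∀ i : ℕ, 1 - q ^ (i + 1) ≠ 0) (k : ℕ) :
    (1 - q ^ (k + 1)) * rogersWeight q t (k + 1) = (1 - t * q ^ k) * rogersWeight q t k := by
  have := hq k
  rw [rogersWeight, Finset.prod_range_succ, ← rogersWeight]
  field_simp

lemma rogersWeight_ne_zero (hq : ∀ i : ℕ, 1 - q ^ (i + 1) ≠ 0) (ht : ∀ i : ℕ, 1 - t * q ^ i ≠ 0)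
    (k : ℕ) : rogersWeight q t k ≠ 0 :=
  Finset.prod_ne_zero_iff.2 fun i _ ↦ div_ne_zero (ht i) (hq i)

end Coefficients

section Form

variable {q t : K}

lemma ultrasphericalForm_comm (n : ℕ) (X Y : K) :
    ultrasphericalForm q t n X Y = ultrasphericalForm q t n Y X := by
  rw [ultrasphericalForm, ← Finset.Nat.sum_antidiagonal_swap]
  exact Finset.sum_congr rfl fun ij _ ↦ by simp only [Prod.fst_swap, Prod.snd_swap]; ring

lemma ultrasphericalForm_mul_mul (n : ℕ) (a X Y : K) :
    ultrasphericalForm q t n (a * X) (a * Y) = a ^ n * ultrasphericalForm q t n X Y := by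
  rw [ultrasphericalForm, ultrasphericalForm, Finset.mul_sum]
  refine Finset.sum_congr rfl fun ij hij ↦ ?_
  rw [← Finset.HasAntidiagonal.mem_antidiagonal.1 hij]
  ring

lemma ultrasphericalForm_succ_sub_qShift_left (hq : ∀ i : ℕ, 1 - q ^ (i + 1) ≠ 0) (n : ℕ)
    (X Y : K) :
    ultrasphericalForm q t (n + 1) X Y - ultrasphericalForm q t (n + 1) (q * X) Y =
      X * (ultrasphericalForm q t n X Y - t * ultrasphericalForm q t n (q * X) Y) := by
  simp only [ultrasphericalForm, Finset.mul_sum, ← Finset.sum_sub_distrib]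
  rw [Finset.Nat.sum_antidiagonal_succ]
  simp only [pow_zero, sub_self, zero_add]
  refine Finset.sum_congr rfl fun ij _ ↦ ?_
  linear_combination rogersWeight q t ij.2 * X ^ (ij.1 + 1) * Y ^ ij.2 *
    one_sub_pow_mul_rogersWeight_succ (t := t) hq ij.1

lemma ultrasphericalForm_succ_qShift_left_sub (hq : ∀ i : ℕ, 1 - q ^ (i + 1) ≠ 0) (n : ℕ)
    (X Y : K) :
    ultrasphericalForm q t (n + 1) (q * X) Y -
        q ^ (n + 1) * ultrasphericalForm q t (n + 1) X Y =
      Y * (ultrasphericalForm q t n (q * X) Y -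
        t * q ^ n * ultrasphericalForm q t n X Y) := by
  have h := ultrasphericalForm_succ_sub_qShift_left (t := t) hq n Y (q * X)
  simp only [ultrasphericalForm_mul_mul, ultrasphericalForm_comm _ Y] at h
  linear_combination h

lemma ultrasphericalForm_pieri (hq : ∀ i : ℕ, 1 - q ^ (i + 1) ≠ 0) (n : ℕ) (X Y : K) :
    (1 - q ^ (n + 2)) * ultrasphericalForm q t (n + 2) X Y =
      (X + Y) * (1 - t * q ^ (n + 1)) * ultrasphericalForm q t (n + 1) X Y -
        X * Y * (1 - t ^ 2 * q ^ n) * ultrasphericalForm q t n X Y := by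
  linear_combination ultrasphericalForm_succ_sub_qShift_left (t := t) hq (n + 1) X Y +
    ultrasphericalForm_succ_qShift_left_sub (t := t) hq (n + 1) X Y -
    Y * ultrasphericalForm_succ_sub_qShift_left (t := t) hq n X Y -
    t * X * ultrasphericalForm_succ_qShift_left_sub (t := t) hq n X Y

lemma ultrasphericalForm_raising (hq : ∀ i : ℕ, 1 - q ^ (i + 1) ≠ 0) (n : ℕ) (X Y : K) :
    (1 - q ^ (n + 1)) * ultrasphericalForm q t (n + 1) X Y =
      (X - t * q ^ n * Y) * ultrasphericalForm q t n X Y +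
        (Y - t * X) * ultrasphericalForm q t n (q * X) Y := by
  linear_combination ultrasphericalForm_succ_sub_qShift_left (t := t) hq n X Y +
    ultrasphericalForm_succ_qShift_left_sub (t := t) hq n X Y

end Form

section OneVariable

variable {q t r X : K}

lemma ultraspherical_zero : ultraspherical q t 0 X = 1 := by
  simp [ultraspherical, ultrasphericalForm, rogersWeight_zero]

lemma one_sub_mul_ultraspherical_one (hq : ∀ i : ℕ, 1 - q ^ (i + 1) ≠ 0) :
    (1 - q) * ultraspherical q t 1 X = (1 - t) * (X + X⁻¹) := by
  have h := one_sub_pow_mul_rogersWeight_succ (t := t) hq 0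
  simp only [zero_add, pow_one, pow_zero, mul_one, rogersWeight_zero] at h
  simp only [ultraspherical, ultrasphericalForm, Finset.Nat.sum_antidiagonal_succ,
    Finset.Nat.antidiagonal_zero, Finset.sum_singleton, rogersWeight_zero, zero_add, pow_zero,
    pow_one, one_mul, mul_one]
  linear_combination (X + X⁻¹) * h

lemma ultraspherical_inv (n : ℕ) : ultraspherical q t n X⁻¹ = ultraspherical q t n X := by
  rw [ultraspherical, inv_inv, ultrasphericalForm_comm, ultraspherical]

lemma ultraspherical_pieri (hq : ∀ i : ℕ, 1 - q ^ (i + 1) ≠ 0) (hX : X ≠ 0) (n : ℕ) :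
    (1 - q ^ (n + 2)) * ultraspherical q t (n + 2) X =
      (X + X⁻¹) * (1 - t * q ^ (n + 1)) * ultraspherical q t (n + 1) X -
        (1 - t ^ 2 * q ^ n) * ultraspherical q t n X := by
  simpa only [ultraspherical, mul_inv_cancel₀ hX, one_mul] using
    ultrasphericalForm_pieri (t := t) hq n X X⁻¹

lemma ultraspherical_raising (hq : ∀ i : ℕ, 1 - q ^ (i + 1) ≠ 0) (hr : r ^ 2 = q) (hr0 : r ≠ 0)
    (n : ℕ) :
    (1 - q ^ (n + 1)) * ultraspherical q t (n + 1) X =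
      (X - t * q ^ n * X⁻¹) * ultraspherical q t n X +
        r ^ n * ((X⁻¹ - t * X) * ultraspherical q t n (r * X)) := by
  have h : ultrasphericalForm q t n (q * X) X⁻¹ = r ^ n * ultraspherical q t n (r * X) := by
    rw [ultraspherical, ← ultrasphericalForm_mul_mul, mul_inv, mul_inv_cancel_left₀ hr0, ← hr, sq,
      mul_assoc]
  rw [ultraspherical, ultrasphericalForm_raising hq n X X⁻¹, h, ← ultraspherical]
  ring

lemma ultraspherical_raising_inv (hq : ∀ i : ℕ, 1 - q ^ (i + 1) ≠ 0) (hr : r ^ 2 = q) (hr0 : r ≠ 0)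
    (n : ℕ) :
    (1 - q ^ (n + 1)) * ultraspherical q t (n + 1) X =
      (X⁻¹ - t * q ^ n * X) * ultraspherical q t n X +
        r ^ n * ((X - t * X⁻¹) * ultraspherical q t n (r * X⁻¹)) := by
  simpa only [ultraspherical_inv, inv_inv] using
    ultraspherical_raising (t := t) (X := X⁻¹) hq hr hr0 n

lemma ultraspherical_macdonald_eigenvalue (hq : ∀ i : ℕ, 1 - q ^ (i + 1) ≠ 0) (hr : r ^ 2 = q)
    (hr0 : r ≠ 0) (n : ℕ) :
    (X - X⁻¹) * ((1 + t * q ^ n) * ultraspherical q t n X) =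
      r ^ n * ((X - t * X⁻¹) * ultraspherical q t n (r * X⁻¹) -
        (X⁻¹ - t * X) * ultraspherical q t n (r * X)) := by
  linear_combination ultraspherical_raising_inv (t := t) (X := X) hq hr hr0 n -
    ultraspherical_raising (t := t) (X := X) hq hr hr0 n

/-- The polynomial obtained from `C_n` by the symmetrized raising operator
`ultraspherical_symm_raising`. -/
def raisedUltraspherical (q t : K) (n : ℕ) (X : K) : K :=
  (1 - q ^ (n + 1)) * ultraspherical q t (n + 1) X +
    t * q ^ n * (X + X⁻¹) * ultraspherical q t n X

lemma ultraspherical_symm_raising (hq : ∀ i : ℕ, 1 - q ^ (i + 1) ≠ 0) (hr : r ^ 2 = q)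
    (hr0 : r ≠ 0) (n : ℕ) :
    (X - X⁻¹) * raisedUltraspherical q t n X =
      r ^ n * (X * ((X - t * X⁻¹) * ultraspherical q t n (r * X⁻¹)) -
        X⁻¹ * ((X⁻¹ - t * X) * ultraspherical q t n (r * X))) := by
  rw [raisedUltraspherical]
  linear_combination X * ultraspherical_raising_inv (t := t) (X := X) hq hr hr0 n -
    X⁻¹ * ultraspherical_raising (t := t) (X := X) hq hr hr0 n

lemma one_sub_mul_raisedUltraspherical_zero (hq : ∀ i : ℕ, 1 - q ^ (i + 1) ≠ 0) :
    (1 - t) * raisedUltraspherical q t 0 X = (1 - q) * ultraspherical q t 1 X := by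
  have h := one_sub_mul_ultraspherical_one (t := t) (X := X) hq
  simp only [raisedUltraspherical, ultraspherical_zero, zero_add, pow_one, pow_zero, mul_one]
  linear_combination -t * h

lemma raisedUltraspherical_succ (hq : ∀ i : ℕ, 1 - q ^ (i + 1) ≠ 0) (hX : X ≠ 0) (n : ℕ) :
    (1 - t * q ^ (n + 1)) * raisedUltraspherical q t (n + 1) X =
      (1 - q ^ (n + 2)) * ultraspherical q t (n + 2) X +
        t * q ^ (n + 1) * (1 - t ^ 2 * q ^ n) * ultraspherical q t n X := by
  rw [raisedUltraspherical]
  linear_combination -t * q ^ (n + 1) * ultraspherical_pieri (t := t) hq hX n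

end OneVariable

lemma sum_antidiagonal_mul_pow_mul_inv_pow {X : ℂ} (hX : X ≠ 0) (n : ℕ) (c : ℕ → ℕ → ℂ)
    (hc : ∀ i j, c i j = c j i) :
    ∑ ij ∈ antidiagonal n, c ij.1 ij.2 * (X ^ ij.1 * X⁻¹ ^ ij.2) =
      ∑ j ∈ Finset.range (n / 2 + 1), c j (n - j) * Msym (n - 2 * j) X := by
  induction n using Nat.twoStepInduction generalizing c with
  | zero => simp [Msym]
  | one =>
    simp [Finset.Nat.sum_antidiagonal_succ, Msym, hc 1 0]
    ring
  | more n ih _ =>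
    have inner := ih (fun i j ↦ c (i + 1) (j + 1)) fun i j ↦ hc _ _
    have h2 : (n + 2) / 2 + 1 = n / 2 + 1 + 1 := by omega
    rw [Finset.Nat.antidiagonal_succ_succ', Finset.sum_cons, Finset.sum_cons, Finset.sum_map, h2,
      Finset.sum_range_succ']
    have hl : ∀ ij ∈ antidiagonal n,
        c (ij.1 + 1) (ij.2 + 1) * (X ^ (ij.1 + 1) * X⁻¹ ^ (ij.2 + 1)) =
          c (ij.1 + 1) (ij.2 + 1) * (X ^ ij.1 * X⁻¹ ^ ij.2) := fun ij _ ↦ by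
      rw [pow_succ, pow_succ]
      field_simp
    have hr : ∀ j ∈ Finset.range (n / 2 + 1),
        c (j + 1) (n + 2 - (j + 1)) * Msym (n + 2 - 2 * (j + 1)) X =
          c (j + 1) (n - j + 1) * Msym (n - 2 * j) X := fun j hj ↦ by
      have := Finset.mem_range.1 hj
      congr 2 <;> omega
    rw [Finset.sum_congr rfl hr, ← inner, ← Finset.sum_congr rfl hl]
    simp [Msym, hc (n + 2) 0]
    ring

lemma prod_rogers_coeff_mul_rogersWeight {q t : ℂ} (hq : ∀ i : ℕ, 1 - q ^ (i + 1) ≠ 0)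
    (ht : ∀ i : ℕ, 1 - t * q ^ i ≠ 0) (j k : ℕ) :
    (∏ i ∈ Finset.range j, ((1 - q ^ (j + k - i)) * (1 - t * q ^ i)) /
      ((1 - q ^ (1 + i)) * (1 - t * q ^ (j + k - i - 1)))) * rogersWeight q t (j + k) =
    rogersWeight q t j * rogersWeight q t k := by
  induction j generalizing k with
  | zero => simp [rogersWeight_zero]
  | succ j ih =>
    have e1 : j + (k + 1) - j = k + 1 := by omega
    rw [add_assoc, add_comm 1 k, Finset.prod_range_succ, mul_right_comm, ih, e1,
      Nat.add_sub_cancel, add_comm 1 j]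
    have hj := one_sub_pow_mul_rogersWeight_succ (t := t) hq j
    have hk := one_sub_pow_mul_rogersWeight_succ (t := t) hq k
    have := hq j
    have := ht k
    field_simp
    linear_combination rogersWeight q t j * (1 - t * q ^ j) * hk -
      rogersWeight q t k * (1 - t * q ^ k) * hj

lemma rogersA1_mul_rogersWeight {q : ℝ} {t X : ℂ} (hq : ∀ i : ℕ, 1 - (q : ℂ) ^ (i + 1) ≠ 0)
    (ht : ∀ i : ℕ, 1 - t * (q : ℂ) ^ i ≠ 0) (hX : X ≠ 0) (n : ℕ) :
    RogersA1 q t n X * rogersWeight (q : ℂ) t n = ultraspherical (q : ℂ) t n X := by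
  rw [ultraspherical, ultrasphericalForm, sum_antidiagonal_mul_pow_mul_inv_pow hX n
    (fun i j ↦ rogersWeight (q : ℂ) t i * rogersWeight (q : ℂ) t j) (fun _ _ ↦ mul_comm _ _),
    Finset.sum_range_succ', Finset.range_eq_Ico, Finset.sum_Ico_add' (fun j ↦
      rogersWeight (q : ℂ) t j * rogersWeight (q : ℂ) t (n - j) * Msym (n - 2 * j) X),
    zero_add, rogersWeight_zero, RogersA1, add_comm, add_mul, Finset.sum_mul]
  congr 1
  · refine Finset.sum_congr rfl fun j hj ↦ ?_
    have hjn : j + (n - j) = n := by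
      have := Finset.mem_Icc.1 hj
      omega
    have h := prod_rogers_coeff_mul_rogersWeight hq ht j (n - j)
    rw [hjn] at h
    rw [mul_right_comm, h]
  · rw [one_mul, mul_comm, mul_zero, Nat.sub_zero]

end Polynomials

section QPochhammer

/-- The infinite `q`-Pochhammer symbol `(a; q)_∞`. -/
def qPochInf (q a : ℂ) : ℂ := ∏' j : ℕ, (1 - a * q ^ j)

variable {q a t : ℂ}

lemma summable_norm_neg_mul_pow (hq : ‖q‖ < 1) (a : ℂ) : Summable fun j : ℕ ↦ ‖-(a * q ^ j)‖ := by
  simpa using (summable_geometric_of_lt_one (norm_nonneg q) hq).mul_left ‖a‖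

lemma multipliable_one_sub_mul_pow (hq : ‖q‖ < 1) (a : ℂ) :
    Multipliable fun j : ℕ ↦ 1 - a * q ^ j := by
  simpa [sub_eq_add_neg] using multipliable_one_add_of_summable (summable_norm_neg_mul_pow hq a)

lemma qPochInf_eq_one_sub_mul (hq : ‖q‖ < 1) (a : ℂ) :
    qPochInf q a = (1 - a) * qPochInf q (a * q) := by
  have h := multipliable_one_sub_mul_pow hq (a * q)
  simp only [mul_assoc, ← pow_succ'] at h
  have h' := tprod_eq_zero_mul' (f := fun j : ℕ ↦ 1 - a * q ^ j) h
  simpa only [qPochInf, mul_assoc, ← pow_succ', pow_zero, mul_one] using h'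

lemma one_sub_ne_zero_of_norm_lt_one (ha : ‖a‖ < 1) : 1 - a ≠ 0 := by
  rintro h
  rw [← sub_eq_zero.1 h, norm_one] at ha
  exact ha.false

lemma norm_mul_lt_one_of_lt_of_le (ha : ‖a‖ < 1) (hq : ‖q‖ ≤ 1) : ‖a * q‖ < 1 := by
  rw [norm_mul]
  exact mul_lt_one_of_nonneg_of_lt_one_left (norm_nonneg a) ha hq

lemma one_sub_mul_pow_ne_zero (hq : ‖q‖ ≤ 1) (ha : ‖a‖ < 1) (i : ℕ) : 1 - a * q ^ i ≠ 0 :=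
  one_sub_ne_zero_of_norm_lt_one <| norm_mul_lt_one_of_lt_of_le ha <| by
    simpa using pow_le_one₀ (norm_nonneg q) hq

lemma qPochInf_ne_zero (hq : ‖q‖ < 1) (ha : ‖a‖ < 1) : qPochInf q a ≠ 0 := by
  have h := tprod_one_add_ne_zero_of_summable (f := fun j : ℕ ↦ -(a * q ^ j))
    (fun j ↦ by simpa [sub_eq_add_neg] using one_sub_mul_pow_ne_zero hq.le ha j)
    (summable_norm_neg_mul_pow hq a)
  simpa [qPochInf, sub_eq_add_neg] using h

lemma differentiable_qPochInf (hq : ‖q‖ < 1) : Differentiable ℂ (qPochInf q) := by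
  intro a
  have h := Summable.hasProdLocallyUniformlyOn_nat_one_add (K := Metric.ball (0 : ℂ) (‖a‖ + 1))
    (f := fun (j : ℕ) (a : ℂ) ↦ -(a * q ^ j)) Metric.isOpen_ball
    ((summable_geometric_of_lt_one (norm_nonneg q) hq).mul_left (‖a‖ + 1))
    (.of_forall fun j x hx ↦ by
      rw [norm_neg, norm_mul, norm_pow]
      gcongr
      exact (mem_ball_zero_iff.1 hx).le)
    (fun j ↦ by fun_prop)
  have hd := (h.differentiableOn (.of_forall fun _ ↦ by
    simpa [Finset.prod_fn] using DifferentiableOn.finsetProd (fun _ _ ↦ by fun_prop))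
    Metric.isOpen_ball).differentiableAt
    (Metric.isOpen_ball.mem_nhds (mem_ball_zero_iff.2 (lt_add_one ‖a‖)))
  exact hd.congr_of_eventuallyEq (.of_forall fun a ↦ by simp only [qPochInf, sub_eq_add_neg])

lemma tprod_one_sub_div_one_sub (hq : ‖q‖ < 1) {b : ℂ} (hb : ‖b * q‖ < 1) :
    ∏' j : ℕ, (1 - a * q ^ (j + 1)) / (1 - b * q ^ (j + 1)) =
      qPochInf q (a * q) / qPochInf q (b * q) := by
  simp only [pow_succ', ← mul_assoc]
  exact (multipliable_one_sub_mul_pow hq _).tprod_div₀ (multipliable_one_sub_mul_pow hq _)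
    (qPochInf_ne_zero hq hb)

end QPochhammer

section Weight

variable {q : ℝ} {t X : ℂ}

lemma muA1_eq_qPochInf (hq : ‖(q : ℂ)‖ < 1) (h₁ : ‖t * X ^ 2‖ < 1) (h₂ : ‖t * X⁻¹ ^ 2 * q‖ < 1) :
    muA1 q t X = qPochInf q (X ^ 2) * qPochInf q (X⁻¹ ^ 2 * q) /
      (qPochInf q (t * X ^ 2) * qPochInf q (t * X⁻¹ ^ 2 * q)) := by
  have m := fun a ↦ multipliable_one_sub_mul_pow hq a
  simp only [muA1, pow_succ' (q : ℂ), ← mul_assoc]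
  rw [Multipliable.tprod_div₀ ((m _).mul (m _)) ((m _).mul (m _)), (m _).tprod_mul (m _),
    (m _).tprod_mul (m _)]
  · rfl
  · rw [(m _).tprod_mul (m _)]
    exact mul_ne_zero (qPochInf_ne_zero hq h₁) (qPochInf_ne_zero hq h₂)

/-- The factor of the weight `muA1` that is invariant under `X ↦ X⁻¹`, see
`muA1_mul_eq_symmWeight_mul`. -/
def symmWeight (q : ℝ) (t X : ℂ) : ℂ :=
  qPochInf q (X ^ 2 * q) * qPochInf q (X⁻¹ ^ 2 * q) /
    (qPochInf q (t * X ^ 2 * q) * qPochInf q (t * X⁻¹ ^ 2 * q))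

lemma symmWeight_inv : symmWeight q t X⁻¹ = symmWeight q t X := by
  simp only [symmWeight, inv_inv]
  ring

lemma muA1_mul_eq_symmWeight_mul (hq : ‖(q : ℂ)‖ < 1) (h₁ : ‖t * X ^ 2‖ < 1)
    (h₂ : ‖t * X⁻¹ ^ 2 * q‖ < 1) :
    muA1 q t X * (1 - t * X ^ 2) = symmWeight q t X * (1 - X ^ 2) := by
  have h₃ := one_sub_ne_zero_of_norm_lt_one h₁
  have h₄ := qPochInf_ne_zero hq (norm_mul_lt_one_of_lt_of_le h₁ hq.le)
  have h₅ := qPochInf_ne_zero hq h₂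
  rw [muA1_eq_qPochInf hq h₁ h₂, symmWeight, qPochInf_eq_one_sub_mul hq (X ^ 2),
    qPochInf_eq_one_sub_mul hq (t * X ^ 2), div_mul_eq_mul_div, div_mul_eq_mul_div,
    div_eq_div_iff (mul_ne_zero (mul_ne_zero h₃ h₄) h₅) (mul_ne_zero h₄ h₅)]
  ring

lemma muA1_mul_inv {r : ℂ} (hq : ‖(q : ℂ)‖ < 1) (hr : r ^ 2 = q) (hr0 : r ≠ 0)
    (h₁ : ‖t * X ^ 2‖ < 1) (h₂ : ‖t * X⁻¹ ^ 2 * q‖ < 1) :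
    muA1 q t (r * X⁻¹) = muA1 q t X := by
  have e₁ : (r * X⁻¹) ^ 2 = X⁻¹ ^ 2 * q := by rw [mul_pow, hr, mul_comm]
  have e₂ : (r * X⁻¹)⁻¹ ^ 2 * q = X ^ 2 := by
    rw [mul_inv, inv_inv, mul_pow, ← hr]
    field_simp
  rw [muA1_eq_qPochInf hq h₁ h₂, muA1_eq_qPochInf hq, e₁, e₂, mul_assoc t _ (q : ℂ), e₂,
    ← mul_assoc]
  · ring
  · rwa [e₁, ← mul_assoc]
  · rwa [mul_assoc t, e₂]

lemma muA1_mul_param (hq : ‖(q : ℂ)‖ < 1) (h₁ : ‖t * X ^ 2‖ < 1) (h₂ : ‖t * X⁻¹ ^ 2 * q‖ < 1) :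
    muA1 q (t * q) X = muA1 q t X * ((1 - t * X ^ 2) * (1 - t * X⁻¹ ^ 2 * q)) := by
  have h₃ := norm_mul_lt_one_of_lt_of_le h₁ hq.le
  have h₄ := norm_mul_lt_one_of_lt_of_le h₂ hq.le
  have e (y : ℂ) : t * q * y = t * y * q := by ring
  have u₁ := one_sub_ne_zero_of_norm_lt_one h₁
  have u₂ := one_sub_ne_zero_of_norm_lt_one h₂
  have P₁ := qPochInf_ne_zero hq h₃
  have P₂ := qPochInf_ne_zero hq h₄
  rw [muA1_eq_qPochInf hq h₁ h₂, muA1_eq_qPochInf hq (by rwa [e]) (by rwa [e]), e, e,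
    qPochInf_eq_one_sub_mul hq (t * X ^ 2), qPochInf_eq_one_sub_mul hq (t * X⁻¹ ^ 2 * q),
    div_mul_eq_mul_div, div_eq_div_iff (mul_ne_zero P₁ P₂)
      (mul_ne_zero (mul_ne_zero u₁ P₁) (mul_ne_zero u₂ P₂))]
  ring

lemma muA1_self (hq : ‖(q : ℂ)‖ < 1) (h₁ : ‖X ^ 2 * q‖ < 1) (h₂ : ‖X⁻¹ ^ 2 * q * q‖ < 1) :
    muA1 q q X = (1 - X ^ 2) * (1 - X⁻¹ ^ 2 * q) := by
  have e (y : ℂ) : q * y = y * q := mul_comm _ _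
  rw [muA1_eq_qPochInf hq (by rwa [e]) (by rwa [e]), qPochInf_eq_one_sub_mul hq (X ^ 2),
    qPochInf_eq_one_sub_mul hq (X⁻¹ ^ 2 * q), e, e,
    div_eq_iff (mul_ne_zero (qPochInf_ne_zero hq h₁) (qPochInf_ne_zero hq h₂))]
  ring

lemma differentiableAt_muA1 (hq : ‖(q : ℂ)‖ < 1) (hX : X ≠ 0) (h₁ : ‖t * X ^ 2‖ < 1)
    (h₂ : ‖t * X⁻¹ ^ 2 * q‖ < 1) : DifferentiableAt ℂ (muA1 q t) X := by
  have c₁ : ContinuousAt (fun X : ℂ ↦ ‖t * X ^ 2‖) X := by fun_prop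
  have c₂ : ContinuousAt (fun X : ℂ ↦ ‖t * X⁻¹ ^ 2 * q‖) X := by fun_prop (disch := assumption)
  have hP {f : ℂ → ℂ} (hf : DifferentiableAt ℂ f X) :
      DifferentiableAt ℂ (fun X ↦ qPochInf q (f X)) X :=
    (differentiable_qPochInf hq (f X)).fun_comp' X hf
  refine DifferentiableAt.congr_of_eventuallyEq (f := fun X ↦
    qPochInf q (X ^ 2) * qPochInf q (X⁻¹ ^ 2 * q) /
      (qPochInf q (t * X ^ 2) * qPochInf q (t * X⁻¹ ^ 2 * q))) ?_ ?_
  · refine ((hP ?_).mul (hP ?_)).div ((hP ?_).mul (hP ?_))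
      (mul_ne_zero (qPochInf_ne_zero hq h₁) (qPochInf_ne_zero hq h₂)) <;>
      fun_prop (disch := assumption)
  · filter_upwards [c₁.eventually_lt_const h₁, c₂.eventually_lt_const h₂] with Y
    exact muA1_eq_qPochInf hq

end Weight

section Theta

variable {q : ℝ} {x : ℂ}

lemma rpow_intCast_div_four (hq : 0 ≤ q) (k : ℤ) : q ^ ((k : ℝ) / 4) = √√q ^ k := by
  rw [Real.sqrt_eq_rpow, Real.sqrt_eq_rpow, ← Real.rpow_intCast, ← Real.rpow_mul hq,
    ← Real.rpow_mul hq]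
  ring_nf

lemma ofReal_sqrt_sq (hq : 0 ≤ q) : (√q : ℂ) ^ 2 = q := by
  exact_mod_cast Real.sq_sqrt hq

lemma thetaA1_eq_tsum_zpow (hq : 0 ≤ q) (x : ℂ) :
    thetaA1 q x = ∑' j : ℤ, (√√q : ℂ) ^ (j ^ 2) * x ^ j := by
  refine tsum_congr fun j ↦ ?_
  have h := rpow_intCast_div_four hq (j ^ 2)
  push_cast at h
  rw [h, Complex.ofReal_zpow]

lemma thetaA1_inv (q : ℝ) (x : ℂ) : thetaA1 q x⁻¹ = thetaA1 q x := by
  rw [thetaA1, thetaA1, ← (Equiv.neg ℤ).tsum_eq]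
  simp

lemma sqrt_sqrt_mul_thetaA1_div_sqrt (hq : 0 < q) (hx : x ≠ 0) :
    √√q * thetaA1 q (x / √q) = x * thetaA1 q x := by
  have hp : (√√q : ℂ) ≠ 0 := by exact_mod_cast (Real.sqrt_pos.2 (Real.sqrt_pos.2 hq)).ne'
  rw [thetaA1_eq_tsum_zpow hq.le, thetaA1_eq_tsum_zpow hq.le, ← tsum_mul_left, ← tsum_mul_left,
    ← (Equiv.addRight (1 : ℤ)).tsum_eq]
  refine tsum_congr fun j ↦ ?_
  have e : (√√q : ℂ) ^ ((j + 1) ^ 2) * √√q = (√√q : ℂ) ^ (j ^ 2) * √q ^ (j + 1) := by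
    rw [← zpow_add_one₀ hp, ← ofReal_sqrt_sq (Real.sqrt_nonneg q), ← zpow_natCast, ← zpow_mul,
      ← zpow_add₀ hp]
    congr 1
    push_cast
    ring
  rw [Equiv.coe_addRight, div_zpow, zpow_add_one₀ hx]
  have hr : (√q : ℂ) ≠ 0 := by exact_mod_cast (Real.sqrt_pos.2 hq).ne'
  field_simp
  linear_combination e

lemma thetaA1_exp (hq : 0 < q) (z : ℂ) :
    thetaA1 q (Complex.exp z) = jacobiTheta₂ (z / (2 * Real.pi * Complex.I))
      (Complex.I * (-Real.log q / (4 * Real.pi) : ℝ)) := by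
  refine tsum_congr fun j ↦ ?_
  have hpi : (Real.pi : ℂ) ≠ 0 := by exact_mod_cast Real.pi_ne_zero
  rw [jacobiTheta₂_term, Real.rpow_def_of_pos hq, Complex.ofReal_exp, ← Complex.exp_int_mul,
    ← Complex.exp_add]
  congr 1
  push_cast
  field_simp
  linear_combination ((j : ℂ) ^ 2 * (Real.log q : ℂ)) * Complex.I_sq

lemma differentiableAt_thetaA1 (hq0 : 0 < q) (hq1 : q < 1) (hx : x ≠ 0) :
    DifferentiableAt ℂ (thetaA1 q) x := by
  have him : 0 < (Complex.I * (-Real.log q / (4 * Real.pi) : ℝ)).im := by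
    rw [Complex.I_mul_im, Complex.ofReal_re]
    exact div_pos (neg_pos.2 (Real.log_neg hq0 hq1)) (by positivity)
  have hev : thetaA1 q =ᶠ[nhds x] fun y ↦ jacobiTheta₂
      ((Complex.log (y / x) + Complex.log x) / (2 * Real.pi * Complex.I))
      (Complex.I * (-Real.log q / (4 * Real.pi) : ℝ)) := by
    filter_upwards [isOpen_ne.mem_nhds hx] with y hy
    rw [← thetaA1_exp hq0, Complex.exp_add, Complex.exp_log (div_ne_zero hy hx),
      Complex.exp_log hx, div_mul_cancel₀ _ hx]
  have hslit : x / x ∈ Complex.slitPlane := by simp [div_self hx]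
  refine DifferentiableAt.congr_of_eventuallyEq ?_ hev
  exact (differentiableAt_jacobiTheta₂_fst _ him).fun_comp' x (by fun_prop (disch := assumption))

lemma summable_pow_sq {p : ℝ} (hp0 : 0 ≤ p) (hp1 : p < 1) : Summable fun j : ℤ ↦ p ^ (j ^ 2) := by
  have h : Summable fun n : ℕ ↦ p ^ ((n : ℤ) ^ 2) :=
    (summable_geometric_of_lt_one hp0 hp1).of_nonneg_of_le (fun n ↦ by positivity) fun n ↦ by
      rw [← Nat.cast_pow, zpow_natCast]
      exact pow_le_pow_of_le_one hp0 hp1.le (Nat.le_self_pow two_ne_zero n)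
  exact Summable.of_nat_of_neg h (by simpa using h)

end Theta

section CircleAverage

open Metric
open Real (circleAverage)

lemma ne_zero_of_mem_sphere_zero_one {x : ℂ} (hx : x ∈ sphere (0 : ℂ) 1) : x ≠ 0 :=
  ne_zero_of_mem_unit_sphere ⟨x, hx⟩

lemma circleAverage_congr_annulus {E : Type*} [NormedAddCommGroup E] [NormedSpace ℂ E]
    [CompleteSpace E] {f : ℂ → E} {c : ℂ} {r R : ℝ} (hr : 0 < r) (hrR : r ≤ R)
    (hf : DifferentiableOn ℂ f (closedBall c R \ ball c r)) :
    circleAverage f c r = circleAverage f c R := by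
  have hsub : ball c R \ closedBall c r ⊆ closedBall c R \ ball c r :=
    Set.sdiff_subset_sdiff ball_subset_closedBall ball_subset_closedBall
  have hint :=
    Complex.circleIntegral_sub_center_inv_smul_eq_of_differentiable_on_annulus_off_countable
      hr hrR Set.countable_empty hf.continuousOn fun x hx ↦
        (hf.mono hsub).differentiableAt ((isOpen_ball.sdiff isClosed_closedBall).mem_nhds hx.1)
  rw [Real.circleAverage_eq_circleIntegral hr.ne', Real.circleAverage_eq_circleIntegral
    (hr.trans_le hrR).ne', hint]

lemma circleAverage_comp_mul_inv {E : Type*} [NormedAddCommGroup E] [NormedSpace ℂ E]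
    [CompleteSpace E] {f : ℂ → E} {r : ℝ} (hr0 : 0 < r) (hr1 : r ≤ 1)
    (hf : DifferentiableOn ℂ f (closedBall 0 1 \ ball 0 r)) :
    circleAverage (fun x ↦ f (r * x⁻¹)) 0 1 = circleAverage f 0 1 := by
  rw [← circleAverage_congr_annulus hr0 hr1 hf,
    Real.circleAverage_zero_one_congr_inv (f := fun x ↦ f (r * x)),
    Real.circleAverage_eq_circleAverage_zero_one (R := r)]
  simp only [add_zero]

lemma circleAverage_eq_zero_of_odd {E : Type*} [NormedAddCommGroup E] [NormedSpace ℝ E]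
    {f : ℂ → E} (hf : ∀ x ∈ sphere (0 : ℂ) 1, f x⁻¹ = -f x) : circleAverage f 0 1 = 0 := by
  have h : circleAverage f 0 1 = circleAverage (fun x ↦ (-1 : ℝ) • f x) 0 1 := by
    rw [← Real.circleAverage_zero_one_congr_inv]
    refine Real.circleAverage_congr_sphere fun x hx ↦ ?_
    rw [abs_one] at hx
    simp only [hf x hx, neg_one_smul]
  rwa [Real.circleAverage_fun_smul, neg_one_smul, eq_neg_iff_add_eq_zero, ← two_smul ℝ,
    smul_eq_zero_iff_right two_ne_zero] at h

lemma circleAverage_tsum {ι E : Type*} [Countable ι] [NormedAddCommGroup E] [NormedSpace ℝ E]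
    [CompleteSpace E] {f : ι → ℂ → E} {u : ι → ℝ} {c : ℂ} {R : ℝ} (hu : Summable u)
    (hf : ∀ i, ContinuousOn (f i) (sphere c |R|)) (hfu : ∀ i, ∀ x ∈ sphere c |R|, ‖f i x‖ ≤ u i) :
    circleAverage (fun x ↦ ∑' i, f i x) c R = ∑' i, circleAverage (f i) c R := by
  have hsum := intervalIntegral.hasSum_integral_of_dominated_convergence (μ := MeasureTheory.volume)
    (a := 0) (b := 2 * Real.pi) (F := fun i φ ↦ f i (circleMap c R φ))
    (f := fun φ ↦ ∑' i, f i (circleMap c R φ)) (fun i _ ↦ u i)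
    (fun i ↦ ((hf i).comp_continuous (continuous_circleMap c R)
      (circleMap_mem_sphere' c R)).aestronglyMeasurable)
    (fun i ↦ .of_forall fun φ _ ↦ hfu i _ (circleMap_mem_sphere' c R φ))
    (.of_forall fun _ _ ↦ hu) (by simp)
    (.of_forall fun φ _ ↦
      (hu.of_norm_bounded fun i ↦ hfu i _ (circleMap_mem_sphere' c R φ)).hasSum)
  exact (hsum.const_smul (2 * Real.pi)⁻¹).tsum_eq.symm

lemma circleAverage_zpow {k : ℤ} (hk : k ≠ 0) : circleAverage (fun x : ℂ ↦ x ^ k) 0 1 = 0 := by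
  have h : ∮ x in C(0, 1), (x - 0)⁻¹ • x ^ k = ∮ x in C(0, 1), (x - 0) ^ (k - 1) :=
    circleIntegral.integral_congr zero_le_one fun x hx ↦ by
      simp only [sub_zero, zpow_sub_one₀ (ne_zero_of_mem_sphere_zero_one hx), smul_eq_mul, mul_comm]
  rw [Real.circleAverage_eq_circleIntegral one_ne_zero, h,
    circleIntegral.integral_sub_zpow_of_ne (by omega), smul_zero]

lemma circleAverage_tsum_mul_zpow {a : ℤ → ℂ} (ha : Summable fun j ↦ ‖a j‖) :
    circleAverage (fun x ↦ ∑' j : ℤ, a j * x ^ j) 0 1 = a 0 := by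
  have h (j : ℤ) : circleAverage (fun x ↦ a j * x ^ j) 0 1 =
      a j * circleAverage (fun x : ℂ ↦ x ^ j) 0 1 :=
    Real.circleAverage_fun_smul (a := a j) (f := (· ^ j))
  rw [circleAverage_tsum ha, tsum_eq_single 0 fun j hj ↦ by rw [h, circleAverage_zpow hj, mul_zero]]
  · simp [Real.circleAverage_const]
  · exact fun j ↦ continuousOn_const.mul <| continuousOn_id.zpow₀ j fun x hx ↦
      Or.inl (ne_zero_of_mem_sphere_zero_one (by simpa using hx))
  · intro j x hx
    rw [abs_one, mem_sphere_zero_iff_norm] at hx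
    rw [norm_mul, norm_zpow, hx, one_zpow, mul_one]

lemma circleAverage_zpow_mul_thetaA1 {q : ℝ} (hq0 : 0 < q) (hq1 : q < 1) (k : ℤ) :
    circleAverage (fun x ↦ x ^ k * thetaA1 q x) 0 1 = (√√q : ℂ) ^ (k ^ 2) := by
  have hs : Summable fun j : ℤ ↦ ‖(√√q : ℂ) ^ ((j - k) ^ 2)‖ := by
    have h := (Equiv.subRight k).summable_iff.2 <|
      summable_pow_sq (Real.sqrt_nonneg _) (show √√q < 1 by simpa [Real.sqrt_lt'])
    simpa only [norm_zpow, Complex.norm_of_nonneg (Real.sqrt_nonneg _), Function.comp_def,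
      Equiv.subRight_apply] using h
  rw [← neg_sq, ← zero_sub, ← circleAverage_tsum_mul_zpow hs]
  refine Real.circleAverage_congr_sphere fun x hx ↦ ?_
  rw [abs_one] at hx
  simp only [thetaA1_eq_tsum_zpow hq0.le]
  rw [← tsum_mul_left, ← (Equiv.subRight k).tsum_eq]
  refine tsum_congr fun j ↦ ?_
  have hx0 := ne_zero_of_mem_sphere_zero_one hx
  rw [Equiv.subRight_apply, mul_left_comm, ← zpow_add₀ hx0, add_sub_cancel]

end CircleAverage

section GaussAverage

open Metric
open Real (circleAverage)

variable {q : ℝ} {t : ℂ}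

/-- The Gaussian integral of the paper: the mean over the unit circle of `f` against the theta
function times the Macdonald weight. -/
def gaussAverage (q : ℝ) (t : ℂ) (f : ℂ → ℂ) : ℂ :=
  circleAverage (fun x ↦ f x * thetaA1 q x * muA1 q t x) 0 1

lemma norm_ofReal_lt_one (hq0 : 0 < q) (hq1 : q < 1) : ‖(q : ℂ)‖ < 1 := by
  rwa [Complex.norm_of_nonneg hq0.le]

lemma norm_mul_sq_lt_one {x : ℂ} (ht : ‖t‖ < 1) (hx : ‖x‖ ≤ 1) : ‖t * x ^ 2‖ < 1 :=
  norm_mul_lt_one_of_lt_of_le ht <| (norm_pow x 2).trans_le (pow_le_one₀ (norm_nonneg x) hx)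

lemma norm_mul_inv_sq_mul_lt_one {x : ℂ} (ht : ‖t‖ < 1) (hq : 0 ≤ q) (hx : √q ≤ ‖x‖) :
    ‖t * x⁻¹ ^ 2 * q‖ < 1 := by
  rw [mul_assoc]
  refine norm_mul_lt_one_of_lt_of_le ht ?_
  rw [norm_mul, norm_pow, norm_inv, inv_pow, Complex.norm_of_nonneg hq, inv_mul_eq_div]
  exact div_le_one_of_le₀ ((Real.sqrt_le_left (norm_nonneg x)).1 hx) (by positivity)

lemma norm_mul_sq_lt_one_of_mem_sphere {x : ℂ} (ht : ‖t‖ < 1) (hx : x ∈ sphere (0 : ℂ) 1) :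
    ‖t * x ^ 2‖ < 1 :=
  norm_mul_sq_lt_one ht (mem_sphere_zero_iff_norm.1 hx).le

lemma norm_mul_inv_sq_mul_lt_one_of_mem_sphere {x : ℂ} (ht : ‖t‖ < 1) (hq0 : 0 < q) (hq1 : q < 1)
    (hx : x ∈ sphere (0 : ℂ) 1) : ‖t * x⁻¹ ^ 2 * q‖ < 1 := by
  refine norm_mul_inv_sq_mul_lt_one ht hq0.le ?_
  rw [mem_sphere_zero_iff_norm.1 hx]
  exact Real.sqrt_le_one.2 hq1.le

lemma continuousOn_thetaA1 (hq0 : 0 < q) (hq1 : q < 1) :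
    ContinuousOn (thetaA1 q) (sphere 0 1) := fun _ hx ↦
  (differentiableAt_thetaA1 hq0 hq1
    (ne_zero_of_mem_sphere_zero_one hx)).continuousAt.continuousWithinAt

lemma continuousOn_muA1 (hq0 : 0 < q) (hq1 : q < 1) (ht : ‖t‖ < 1) :
    ContinuousOn (muA1 q t) (sphere 0 1) := fun _ hx ↦
  (differentiableAt_muA1 (norm_ofReal_lt_one hq0 hq1) (ne_zero_of_mem_sphere_zero_one hx)
    (norm_mul_sq_lt_one_of_mem_sphere ht hx)
    (norm_mul_inv_sq_mul_lt_one_of_mem_sphere ht hq0 hq1 hx)).continuousAt.continuousWithinAt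

lemma gaussAverage_congr {f g : ℂ → ℂ} (h : Set.EqOn f g (sphere 0 1)) :
    gaussAverage q t f = gaussAverage q t g :=
  Real.circleAverage_congr_sphere fun x hx ↦ by simp only [h (by rwa [abs_one] at hx)]

lemma gaussAverage_const_mul (a : ℂ) (f : ℂ → ℂ) :
    gaussAverage q t (fun x ↦ a * f x) = a * gaussAverage q t f := by
  simp only [gaussAverage, mul_assoc]
  exact Real.circleAverage_fun_smul (a := a) (f := fun x ↦ f x * (thetaA1 q x * muA1 q t x))

lemma gaussAverage_add (hq0 : 0 < q) (hq1 : q < 1) (ht : ‖t‖ < 1) {f g : ℂ → ℂ}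
    (hf : ContinuousOn f (sphere 0 1)) (hg : ContinuousOn g (sphere 0 1)) :
    gaussAverage q t (fun x ↦ f x + g x) = gaussAverage q t f + gaussAverage q t g := by
  have hint {f : ℂ → ℂ} (hf : ContinuousOn f (sphere 0 1)) :
      CircleIntegrable (fun x ↦ f x * thetaA1 q x * muA1 q t x) 0 1 :=
    ((hf.mul (continuousOn_thetaA1 hq0 hq1)).mul
      (continuousOn_muA1 hq0 hq1 ht)).circleIntegrable zero_le_one
  simp only [gaussAverage, add_mul]
  exact Real.circleAverage_fun_add (hint hf) (hint hg)

/-- The quasi-periodicity of `thetaA1` under `x ↦ √q x` and the invariance of `muA1` under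
`x ↦ √q x⁻¹`, integrated along the circles of radii `1` and `√q`. -/
lemma gaussAverage_self_mul (hq0 : 0 < q) (hq1 : q < 1) (ht : ‖t‖ < 1) {f : ℂ → ℂ}
    (hf : DifferentiableOn ℂ f (closedBall 0 1 \ ball 0 √q)) :
    gaussAverage q t (fun x ↦ x * f x) = √√q * gaussAverage q t (fun x ↦ f (√q * x⁻¹)) := by
  have hr0 : 0 < √q := Real.sqrt_pos.2 hq0
  have hrC : (√q : ℂ) ≠ 0 := by exact_mod_cast hr0.ne'
  have hq := norm_ofReal_lt_one hq0 hq1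
  have hG : DifferentiableOn ℂ (fun x ↦ f x * thetaA1 q (x / √q) * muA1 q t x)
      (closedBall 0 1 \ ball 0 √q) := by
    intro x hx
    have hx₁ : ‖x‖ ≤ 1 := mem_closedBall_zero_iff.1 hx.1
    have hx₂ : √q ≤ ‖x‖ := by simpa using hx.2
    have hx0 : x ≠ 0 := norm_pos_iff.1 (hr0.trans_le hx₂)
    have hθ : DifferentiableAt ℂ (fun x ↦ thetaA1 q (x / √q)) x :=
      DifferentiableAt.comp x (f := fun x ↦ x / (√q : ℂ))
        (differentiableAt_thetaA1 hq0 hq1 (div_ne_zero hx0 hrC)) (by fun_prop)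
    have hμ := differentiableAt_muA1 hq hx0 (norm_mul_sq_lt_one ht hx₁)
      (norm_mul_inv_sq_mul_lt_one ht hq0.le hx₂)
    exact ((hf x hx).mul hθ.differentiableWithinAt).mul hμ.differentiableWithinAt
  calc gaussAverage q t (fun x ↦ x * f x)
      = circleAverage (fun x ↦ (√√q : ℂ) • (f x * thetaA1 q (x / √q) * muA1 q t x)) 0 1 := by
        refine Real.circleAverage_congr_sphere fun x hx ↦ ?_
        rw [abs_one] at hx
        linear_combination -(f x * muA1 q t x) *
          sqrt_sqrt_mul_thetaA1_div_sqrt hq0 (ne_zero_of_mem_sphere_zero_one hx)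
    _ = √√q * circleAverage (fun x ↦ f x * thetaA1 q (x / √q) * muA1 q t x) 0 1 :=
        Real.circleAverage_fun_smul
    _ = √√q * gaussAverage q t (fun x ↦ f (√q * x⁻¹)) := by
        rw [← circleAverage_comp_mul_inv hr0 (Real.sqrt_le_one.2 hq1.le) hG]
        refine congrArg _ (Real.circleAverage_congr_sphere fun x hx ↦ ?_)
        rw [abs_one] at hx
        simp only [mul_div_cancel_left₀ _ hrC, thetaA1_inv,
          muA1_mul_inv hq (ofReal_sqrt_sq hq0.le) hrC (norm_mul_sq_lt_one_of_mem_sphere ht hx)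
            (norm_mul_inv_sq_mul_lt_one_of_mem_sphere ht hq0 hq1 hx)]

/-- The difference of the two integrands is odd under `x ↦ x⁻¹`, because `muA1` is
`(1 - x²) / (1 - t x²)` times an invariant factor. -/
lemma gaussAverage_eq_of_symmetrization (hq0 : 0 < q) (hq1 : q < 1) (ht : ‖t‖ < 1) {f g : ℂ → ℂ}
    (hf : ContinuousOn f (sphere 0 1)) (hg : ContinuousOn g (sphere 0 1))
    (h : ∀ x ∈ sphere (0 : ℂ) 1,
      (x - x⁻¹) * g x = (x - t * x⁻¹) * f x - (x⁻¹ - t * x) * f x⁻¹) :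
    gaussAverage q t g = (1 + t) * gaussAverage q t f := by
  have hodd : gaussAverage q t (fun x ↦ g x + -(1 + t) * f x) = 0 := by
    have hW : ∀ x ∈ sphere (0 : ℂ) 1, (g x + -(1 + t) * f x) * thetaA1 q x * muA1 q t x =
        (f x⁻¹ - f x) * thetaA1 q x * symmWeight q t x := fun x hx ↦ by
      have h₁ := norm_mul_sq_lt_one_of_mem_sphere ht hx
      have hμ := muA1_mul_eq_symmWeight_mul (norm_ofReal_lt_one hq0 hq1) h₁
        (norm_mul_inv_sq_mul_lt_one_of_mem_sphere ht hq0 hq1 hx)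
      have hx0 := mul_inv_cancel₀ (ne_zero_of_mem_sphere_zero_one hx)
      refine mul_right_cancel₀ (one_sub_ne_zero_of_norm_lt_one h₁) ?_
      linear_combination (g x + -(1 + t) * f x) * thetaA1 q x * hμ -
        x * thetaA1 q x * symmWeight q t x * h x hx -
        thetaA1 q x * symmWeight q t x * (g x - t * f x - f x⁻¹) * hx0
    rw [gaussAverage, Real.circleAverage_congr_sphere (by rwa [abs_one])]
    refine circleAverage_eq_zero_of_odd fun x _ ↦ ?_
    rw [inv_inv, thetaA1_inv, symmWeight_inv]
    ring
  rw [gaussAverage_add hq0 hq1 ht hg (hf.const_mul _), gaussAverage_const_mul] at hodd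
  linear_combination hodd

end GaussAverage

section Mass

open Metric
open Real (circleAverage)

variable {q : ℝ} {t : ℂ}

lemma continuousOn_inv_sphere : ContinuousOn (fun x : ℂ ↦ x⁻¹) (sphere 0 1) :=
  continuousOn_id.inv₀ fun _ hx ↦ ne_zero_of_mem_sphere_zero_one hx

lemma gaussAverage_id (hq0 : 0 < q) (hq1 : q < 1) (ht : ‖t‖ < 1) :
    gaussAverage q t (fun x ↦ x) = √√q * gaussAverage q t fun _ ↦ 1 := by
  simpa only [mul_one] using
    gaussAverage_self_mul hq0 hq1 ht (differentiableOn_const (1 : ℂ))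

lemma gaussAverage_inv (hq0 : 0 < q) (hq1 : q < 1) (ht : ‖t‖ < 1) :
    gaussAverage q t (fun x ↦ x⁻¹) = t * gaussAverage q t fun x ↦ x := by
  have h := gaussAverage_eq_of_symmetrization (f := fun x ↦ x) (g := fun x ↦ x + x⁻¹) hq0 hq1 ht
    continuousOn_id (continuousOn_id.fun_add continuousOn_inv_sphere) fun _ _ ↦ by ring
  rw [gaussAverage_add (f := fun x ↦ x) hq0 hq1 ht continuousOn_id continuousOn_inv_sphere] at h
  linear_combination h

lemma gaussAverage_sq (hq0 : 0 < q) (hq1 : q < 1) (ht : ‖t‖ < 1) :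
    gaussAverage q t (fun x ↦ x ^ 2) = q * t * gaussAverage q t fun _ ↦ 1 := by
  have hp : (√√q : ℂ) ^ 2 = √q := ofReal_sqrt_sq (Real.sqrt_nonneg q)
  simp only [sq (_ : ℂ)]
  rw [gaussAverage_self_mul (f := fun x ↦ x) hq0 hq1 ht differentiableOn_id, gaussAverage_const_mul,
    gaussAverage_inv hq0 hq1 ht, gaussAverage_id hq0 hq1 ht, ← ofReal_sqrt_sq hq0.le]
  linear_combination √q * t * gaussAverage q t (fun _ ↦ 1) * hp

lemma gaussAverage_inv_sq (hq0 : 0 < q) (hq1 : q < 1) (ht : ‖t‖ < 1) :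
    gaussAverage q t (fun x ↦ x⁻¹ ^ 2) = (q * t ^ 2 + t - 1) * gaussAverage q t fun _ ↦ 1 := by
  have hsq : ContinuousOn (fun x : ℂ ↦ x ^ 2) (sphere 0 1) := by fun_prop
  have hinv := continuousOn_inv_sphere.fun_pow 2
  have hc : ContinuousOn (fun _ : ℂ ↦ (1 - t) * 1) (sphere 0 1) := continuousOn_const
  have h := gaussAverage_eq_of_symmetrization (f := fun x ↦ x ^ 2)
    (g := fun x ↦ x ^ 2 + x⁻¹ ^ 2 + (1 - t) * 1) hq0 hq1 ht hsq ((hsq.fun_add hinv).add hc)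
    fun x hx ↦ by
      linear_combination (1 - t) * (x⁻¹ - x) * mul_inv_cancel₀ (ne_zero_of_mem_sphere_zero_one hx)
  rw [gaussAverage_add hq0 hq1 ht (hsq.fun_add hinv) hc, gaussAverage_add hq0 hq1 ht hsq hinv,
    gaussAverage_const_mul, gaussAverage_sq hq0 hq1 ht] at h
  linear_combination h

lemma gaussAverage_one_mul_param (hq0 : 0 < q) (hq1 : q < 1) (ht : ‖t‖ < 1) :
    gaussAverage q (t * q) (fun _ ↦ 1) =
      (1 + t * q) * (1 - t ^ 2 * q) * gaussAverage q t fun _ ↦ 1 := by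
  have hsq : ContinuousOn (fun x : ℂ ↦ -t * x ^ 2) (sphere 0 1) := by fun_prop
  have hinv : ContinuousOn (fun x : ℂ ↦ -(t * q) * x⁻¹ ^ 2) (sphere 0 1) :=
    (continuousOn_inv_sphere.fun_pow 2).const_mul _
  have hc : ContinuousOn (fun _ : ℂ ↦ (1 + t ^ 2 * q) * 1) (sphere 0 1) := continuousOn_const
  calc gaussAverage q (t * q) (fun _ ↦ 1)
      = gaussAverage q t (fun x ↦ (1 + t ^ 2 * q) * 1 + -t * x ^ 2 + -(t * q) * x⁻¹ ^ 2) := by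
        refine Real.circleAverage_congr_sphere fun x hx ↦ ?_
        rw [abs_one] at hx
        simp only [muA1_mul_param (norm_ofReal_lt_one hq0 hq1)
          (norm_mul_sq_lt_one_of_mem_sphere ht hx)
          (norm_mul_inv_sq_mul_lt_one_of_mem_sphere ht hq0 hq1 hx)]
        have := mul_inv_cancel₀ (ne_zero_of_mem_sphere_zero_one hx)
        linear_combination t ^ 2 * q * thetaA1 q x * muA1 q t x * (x * x⁻¹ + 1) * this
    _ = (1 + t * q) * (1 - t ^ 2 * q) * gaussAverage q t fun _ ↦ 1 := by
        rw [gaussAverage_add hq0 hq1 ht (hc.fun_add hsq) hinv, gaussAverage_add hq0 hq1 ht hc hsq,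
          gaussAverage_const_mul, gaussAverage_const_mul, gaussAverage_const_mul,
          gaussAverage_sq hq0 hq1 ht, gaussAverage_inv_sq hq0 hq1 ht]
        ring

lemma gaussAverage_one_self (hq0 : 0 < q) (hq1 : q < 1) :
    gaussAverage q q (fun _ ↦ 1) = 1 - (q : ℂ) ^ 2 := by
  have hq := norm_ofReal_lt_one hq0 hq1
  have hp : (√√q : ℂ) ^ 4 = q := by
    rw [← ofReal_sqrt_sq hq0.le, ← ofReal_sqrt_sq (Real.sqrt_nonneg q), ← pow_mul]
  have hint (a : ℂ) (k : ℤ) : CircleIntegrable (fun x ↦ a * (x ^ k * thetaA1 q x)) 0 1 :=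
    ((continuousOn_id.zpow₀ k fun x hx ↦ Or.inl (ne_zero_of_mem_sphere_zero_one hx)).mul
      (continuousOn_thetaA1 hq0 hq1)).const_mul a |>.circleIntegrable zero_le_one
  calc gaussAverage q q (fun _ ↦ 1)
      = circleAverage (fun x ↦ (1 + q) * (x ^ (0 : ℤ) * thetaA1 q x) +
          -1 * (x ^ (2 : ℤ) * thetaA1 q x) + -q * (x ^ (-2 : ℤ) * thetaA1 q x)) 0 1 := by
        refine Real.circleAverage_congr_sphere fun x hx ↦ ?_
        rw [abs_one] at hx
        have h₂ : ‖x⁻¹ ^ 2 * q * q‖ < 1 := by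
          simpa only [mul_comm (q : ℂ) (x⁻¹ ^ 2)] using
            norm_mul_inv_sq_mul_lt_one_of_mem_sphere hq hq0 hq1 hx
        have h₁ : ‖x ^ 2 * q‖ < 1 := by
          simpa only [mul_comm] using norm_mul_sq_lt_one_of_mem_sphere hq hx
        simp only [muA1_self hq h₁ h₂, zpow_neg, zpow_ofNat]
        have := mul_inv_cancel₀ (ne_zero_of_mem_sphere_zero_one hx)
        linear_combination q * thetaA1 q x * (x * x⁻¹ + 1) * this
    _ = (1 + q) * (√√q : ℂ) ^ ((0 : ℤ) ^ 2) + -1 * (√√q : ℂ) ^ ((2 : ℤ) ^ 2) +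
          -q * (√√q : ℂ) ^ ((-2 : ℤ) ^ 2) := by
        rw [Real.circleAverage_fun_add ((hint _ _).fun_add (hint _ _)) (hint _ _),
          Real.circleAverage_fun_add (hint _ _) (hint _ _)]
        simp only [← smul_eq_mul (1 + (q : ℂ)), ← smul_eq_mul (-1 : ℂ), ← smul_eq_mul (-(q : ℂ)),
          Real.circleAverage_fun_smul, circleAverage_zpow_mul_thetaA1 hq0 hq1]
    _ = 1 - (q : ℂ) ^ 2 := by
        norm_num [zpow_ofNat, hp]
        ring

lemma continuousOn_gaussAverage (hq0 : 0 < q) (hq1 : q < 1) {f : ℂ → ℂ}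
    (hf : ContinuousOn f (sphere 0 1)) :
    ContinuousOn (fun t ↦ gaussAverage q t f) (ball 0 1) := by
  have hq := norm_ofReal_lt_one hq0 hq1
  have hP : Continuous (qPochInf q) := (differentiable_qPochInf hq).continuous
  have hcirc {g : ℂ → ℂ} (hg : ContinuousOn g (sphere 0 1)) :
      Continuous fun y : ball (0 : ℂ) 1 × ℝ ↦ g (circleMap 0 1 y.2) :=
    (hg.comp_continuous (continuous_circleMap 0 1)
      (circleMap_mem_sphere 0 zero_le_one)).comp continuous_snd
  have hinv := hcirc continuousOn_inv_sphere
  have h₁ (y : ball (0 : ℂ) 1 × ℝ) := norm_mul_sq_lt_one_of_mem_sphere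
    (mem_ball_zero_iff.1 y.1.2) (circleMap_mem_sphere 0 zero_le_one y.2)
  have h₂ (y : ball (0 : ℂ) 1 × ℝ) := norm_mul_inv_sq_mul_lt_one_of_mem_sphere
    (mem_ball_zero_iff.1 y.1.2) hq0 hq1 (circleMap_mem_sphere 0 zero_le_one y.2)
  have hμ : Continuous fun y : ball (0 : ℂ) 1 × ℝ ↦ muA1 q y.1 (circleMap 0 1 y.2) := by
    simp only [fun y ↦ muA1_eq_qPochInf hq (h₁ y) (h₂ y)]
    exact Continuous.div (by fun_prop) (by fun_prop) fun y ↦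
      mul_ne_zero (qPochInf_ne_zero hq (h₁ y)) (qPochInf_ne_zero hq (h₂ y))
  exact continuousOn_iff_continuous_domRestrict.2 <| Continuous.const_smul
    (intervalIntegral.continuous_parametric_intervalIntegral_of_continuous'
      (((hcirc hf).mul (hcirc (continuousOn_thetaA1 hq0 hq1))).mul hμ) _ _) _

/-- The quotient of the total mass of the Gaussian integral by its claimed value. -/
def normalizedMass (q : ℝ) (t : ℂ) : ℂ :=
  gaussAverage q t (fun _ ↦ 1) * qPochInf q (t ^ 2 * q) / qPochInf q (t * q)

lemma norm_sq_mul_lt_one {a : ℂ} (ht : ‖t‖ < 1) (ha : ‖a‖ ≤ 1) : ‖t ^ 2 * a‖ < 1 := by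
  rw [sq, mul_assoc, mul_comm t a, ← mul_assoc]
  exact norm_mul_lt_one_of_lt_of_le (norm_mul_lt_one_of_lt_of_le ht ha) ht.le

lemma normalizedMass_mul_param (hq0 : 0 < q) (hq1 : q < 1) (ht : ‖t‖ < 1) :
    normalizedMass q (t * q) = normalizedMass q t := by
  have hq := norm_ofReal_lt_one hq0 hq1
  have h₁ := norm_mul_lt_one_of_lt_of_le ht hq.le
  have h₂ := norm_mul_lt_one_of_lt_of_le h₁ hq.le
  have e : t ^ 2 * q * q * q = (t * q) ^ 2 * q := by ring
  rw [normalizedMass, normalizedMass, gaussAverage_one_mul_param hq0 hq1 ht,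
    qPochInf_eq_one_sub_mul hq (t ^ 2 * q), qPochInf_eq_one_sub_mul hq (t ^ 2 * q * q),
    qPochInf_eq_one_sub_mul hq (t * q), e, div_eq_div_iff (qPochInf_ne_zero hq h₂)
      (mul_ne_zero (one_sub_ne_zero_of_norm_lt_one h₁) (qPochInf_ne_zero hq h₂))]
  ring

lemma normalizedMass_self (hq0 : 0 < q) (hq1 : q < 1) : normalizedMass q q = 1 := by
  have hq := norm_ofReal_lt_one hq0 hq1
  have h := norm_mul_lt_one_of_lt_of_le hq hq.le
  rw [normalizedMass, gaussAverage_one_self hq0 hq1, sq,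
    ← qPochInf_eq_one_sub_mul hq (q * q), div_self (qPochInf_ne_zero hq h)]

lemma continuousAt_normalizedMass_zero (hq0 : 0 < q) (hq1 : q < 1) :
    ContinuousAt (normalizedMass q) 0 := by
  have hq := norm_ofReal_lt_one hq0 hq1
  have hP : Continuous (qPochInf q) := (differentiable_qPochInf hq).continuous
  have hE : ContinuousAt (fun t ↦ gaussAverage q t fun _ ↦ 1) 0 :=
    (continuousOn_gaussAverage hq0 hq1 continuousOn_const).continuousAt (ball_mem_nhds 0 one_pos)
  refine (hE.mul (by fun_prop)).div (by fun_prop) (qPochInf_ne_zero hq ?_)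
  rw [zero_mul, norm_zero]
  exact one_pos

lemma normalizedMass_eq_normalizedMass_zero (hq0 : 0 < q) (hq1 : q < 1) (ht : ‖t‖ < 1) :
    normalizedMass q t = normalizedMass q 0 := by
  have hq := norm_ofReal_lt_one hq0 hq1
  have hconst (N : ℕ) : normalizedMass q (t * q ^ N) = normalizedMass q t := by
    induction N with
    | zero => rw [pow_zero, mul_one]
    | succ N ih =>
      have hN : ‖(q : ℂ) ^ N‖ ≤ 1 := (norm_pow _ N).trans_le (pow_le_one₀ (norm_nonneg _) hq.le)
      rw [pow_succ, ← mul_assoc,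
        normalizedMass_mul_param hq0 hq1 (norm_mul_lt_one_of_lt_of_le ht hN), ih]
  have hlim : Tendsto (fun N : ℕ ↦ t * (q : ℂ) ^ N) atTop (nhds 0) := by
    simpa using (tendsto_pow_atTop_nhds_zero_of_norm_lt_one hq).const_mul t
  exact tendsto_nhds_unique tendsto_const_nhds
    (((continuousAt_normalizedMass_zero hq0 hq1).tendsto.comp hlim).congr hconst)

lemma gaussAverage_one (hq0 : 0 < q) (hq1 : q < 1) (ht : ‖t‖ < 1) :
    gaussAverage q t (fun _ ↦ 1) = qPochInf q (t * q) / qPochInf q (t ^ 2 * q) := by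
  have hq := norm_ofReal_lt_one hq0 hq1
  have h : normalizedMass q t = 1 := by
    rw [normalizedMass_eq_normalizedMass_zero hq0 hq1 ht,
      ← normalizedMass_eq_normalizedMass_zero hq0 hq1 hq, normalizedMass_self hq0 hq1]
  rwa [normalizedMass, div_eq_one_iff_eq
    (qPochInf_ne_zero hq (norm_mul_lt_one_of_lt_of_le ht hq.le)),
    ← eq_div_iff (qPochInf_ne_zero hq (norm_sq_mul_lt_one ht hq.le))] at h

end Mass

section Recurrence

open Metric

variable {q : ℝ} {s t : ℂ}

lemma one_sub_pow_succ_ne_zero (hq0 : 0 < q) (hq1 : q < 1) (i : ℕ) : 1 - (q : ℂ) ^ (i + 1) ≠ 0 := by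
  have hq := norm_ofReal_lt_one hq0 hq1
  simpa only [pow_succ'] using one_sub_mul_pow_ne_zero hq.le hq i

lemma differentiableOn_ultraspherical {a : ℂ} (n : ℕ) :
    DifferentiableOn ℂ (ultraspherical a t n) {0}ᶜ := by
  have : DifferentiableOn ℂ (fun x : ℂ ↦ x⁻¹) {0}ᶜ := differentiableOn_inv
  unfold ultraspherical ultrasphericalForm
  fun_prop

lemma differentiableOn_ultraspherical_mul_inv {a r : ℂ} (hr0 : r ≠ 0) (n : ℕ) :
    DifferentiableOn ℂ (fun x ↦ ultraspherical a t n (r * x⁻¹)) {0}ᶜ :=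
  (differentiableOn_ultraspherical n).comp (differentiableOn_inv.const_mul r)
    fun _ hx ↦ mul_ne_zero hr0 (inv_ne_zero hx)

lemma differentiableOn_raisedUltraspherical {a : ℂ} (n : ℕ) :
    DifferentiableOn ℂ (raisedUltraspherical a t n) {0}ᶜ := by
  have : DifferentiableOn ℂ (fun x : ℂ ↦ x⁻¹) {0}ᶜ := differentiableOn_inv
  have h := fun n ↦ differentiableOn_ultraspherical (a := a) (t := t) n
  unfold raisedUltraspherical
  fun_prop

lemma sphere_zero_one_subset_compl_zero : sphere (0 : ℂ) 1 ⊆ {0}ᶜ :=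
  fun _ ↦ ne_zero_of_mem_sphere_zero_one

lemma one_add_mul_gaussAverage_ultraspherical_mul (hq0 : 0 < q) (hq1 : q < 1) (ht : ‖t‖ < 1)
    (m n : ℕ) :
    (1 + t * q ^ m) * gaussAverage q t (fun x ↦
        ultraspherical (q : ℂ) t m x * ultraspherical (q : ℂ) t n x) =
      (1 + t) * √q ^ m * gaussAverage q t fun x ↦
        ultraspherical (q : ℂ) t m (√q * x⁻¹) * ultraspherical (q : ℂ) t n x := by
  have hr0 : (√q : ℂ) ≠ 0 := by exact_mod_cast (Real.sqrt_pos.2 hq0).ne'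
  have hC := fun n ↦ differentiableOn_ultraspherical (a := q) (t := t) n
  have hC' := differentiableOn_ultraspherical_mul_inv (a := q) (t := t) hr0 m
  rw [← gaussAverage_const_mul, mul_assoc, ← gaussAverage_const_mul]
  refine gaussAverage_eq_of_symmetrization hq0 hq1 ht
    ((hC'.mul (hC n)).const_mul _ |>.continuousOn.mono sphere_zero_one_subset_compl_zero)
    (((hC m).mul (hC n)).const_mul _ |>.continuousOn.mono sphere_zero_one_subset_compl_zero)
    fun x _ ↦ ?_
  rw [ultraspherical_inv, inv_inv]
  linear_combination ultraspherical (q : ℂ) t n x *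
    ultraspherical_macdonald_eigenvalue (t := t) (X := x)
    (one_sub_pow_succ_ne_zero hq0 hq1) (ofReal_sqrt_sq hq0.le) hr0 m

lemma gaussAverage_ultraspherical_mul_raised (hq0 : 0 < q) (hq1 : q < 1) (ht : ‖t‖ < 1)
    (m n : ℕ) :
    gaussAverage q t (fun x ↦ ultraspherical (q : ℂ) t m x * raisedUltraspherical (q : ℂ) t n x) =
      (1 + t) * √q ^ n * √√q * gaussAverage q t fun x ↦
        ultraspherical (q : ℂ) t m (√q * x⁻¹) * ultraspherical (q : ℂ) t n x := by
  have hr0 : (√q : ℂ) ≠ 0 := by exact_mod_cast (Real.sqrt_pos.2 hq0).ne'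
  have hC := fun n ↦ differentiableOn_ultraspherical (a := q) (t := t) n
  have hf := (hC m).mul (differentiableOn_ultraspherical_mul_inv (a := q) (t := t) hr0 n)
  have hsubset : closedBall (0 : ℂ) 1 \ ball 0 √q ⊆ {0}ᶜ := fun x hx h ↦
    hx.2 (h ▸ mem_ball_self (Real.sqrt_pos.2 hq0))
  have hsymm := gaussAverage_eq_of_symmetrization hq0 hq1 ht
    (f := fun x ↦ √q ^ n * (x *
      (ultraspherical (q : ℂ) t m x * ultraspherical (q : ℂ) t n (√q * x⁻¹))))
    ((differentiableOn_id.mul hf).const_mul _ |>.continuousOn.mono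
      sphere_zero_one_subset_compl_zero)
    ((hC m).mul (differentiableOn_raisedUltraspherical n) |>.continuousOn.mono
      sphere_zero_one_subset_compl_zero) fun x _ ↦ by
      simp only [Pi.mul_apply, ultraspherical_inv, inv_inv]
      linear_combination ultraspherical (q : ℂ) t m x *
        ultraspherical_symm_raising (t := t) (X := x)
          (one_sub_pow_succ_ne_zero hq0 hq1) (ofReal_sqrt_sq hq0.le) hr0 n
  have hshift := gaussAverage_self_mul hq0 hq1 ht (hf.mono hsubset)
  simp only [Pi.mul_apply, mul_inv, inv_inv, mul_inv_cancel_left₀ hr0] at hshift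
  rw [gaussAverage_const_mul, hshift] at hsymm
  linear_combination hsymm

lemma sqrt_pow_mul_gaussAverage_ultraspherical_mul_raised (hq0 : 0 < q) (hq1 : q < 1)
    (ht : ‖t‖ < 1) (m n : ℕ) :
    √q ^ m *
        gaussAverage q t (fun x ↦
          ultraspherical (q : ℂ) t m x * raisedUltraspherical (q : ℂ) t n x) =
      √√q * √q ^ n * (1 + t * q ^ m) *
        gaussAverage q t fun x ↦ ultraspherical (q : ℂ) t m x * ultraspherical (q : ℂ) t n x := by
  linear_combination √q ^ m * gaussAverage_ultraspherical_mul_raised hq0 hq1 ht m n -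
    √√q * √q ^ n * one_add_mul_gaussAverage_ultraspherical_mul hq0 hq1 ht m n

lemma gaussAverage_ultraspherical_mul_succ_succ (hq0 : 0 < q) (hq1 : q < 1) (ht : ‖t‖ < 1)
    (m n : ℕ) :
    (1 - q ^ (n + 2)) * gaussAverage q t (fun x ↦
        ultraspherical (q : ℂ) t m x * ultraspherical (q : ℂ) t (n + 2) x) =
      (1 - t * q ^ (n + 1)) * gaussAverage q t (fun x ↦
        ultraspherical (q : ℂ) t m x * raisedUltraspherical (q : ℂ) t (n + 1) x) -
      t * q ^ (n + 1) * (1 - t ^ 2 * q ^ n) * gaussAverage q t (fun x ↦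
        ultraspherical (q : ℂ) t m x * ultraspherical (q : ℂ) t n x) := by
  have hC := fun n ↦ differentiableOn_ultraspherical (a := q) (t := t) n
  have hcont (a : ℂ) (n : ℕ) : ContinuousOn (fun x ↦ a *
      (ultraspherical (q : ℂ) t m x * ultraspherical (q : ℂ) t n x)) (sphere 0 1) :=
    ((hC m).mul (hC n)).const_mul a |>.continuousOn.mono sphere_zero_one_subset_compl_zero
  rw [eq_sub_iff_add_eq, ← gaussAverage_const_mul, ← gaussAverage_const_mul,
    ← gaussAverage_const_mul, ← gaussAverage_add hq0 hq1 ht (hcont _ _) (hcont _ _)]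
  refine gaussAverage_congr fun x hx ↦ ?_
  linear_combination -ultraspherical (q : ℂ) t m x * raisedUltraspherical_succ (t := t)
    (one_sub_pow_succ_ne_zero hq0 hq1) (ne_zero_of_mem_sphere_zero_one hx) n

lemma one_sub_mul_gaussAverage_ultraspherical_mul_one (hq0 : 0 < q) (hq1 : q < 1) (m : ℕ) :
    (1 - q) * gaussAverage q t (fun x ↦
        ultraspherical (q : ℂ) t m x * ultraspherical (q : ℂ) t 1 x) =
      (1 - t) * gaussAverage q t (fun x ↦
        ultraspherical (q : ℂ) t m x * raisedUltraspherical (q : ℂ) t 0 x) := by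
  rw [← gaussAverage_const_mul, ← gaussAverage_const_mul]
  refine gaussAverage_congr fun x _ ↦ ?_
  linear_combination -ultraspherical (q : ℂ) t m x * one_sub_mul_raisedUltraspherical_zero (t := t)
    (X := x) (one_sub_pow_succ_ne_zero hq0 hq1)

lemma gaussian_mul_ultraspherical_succ_succ {K : Type*} [Field K] {p q s y : K}
    (hq : ∀ i : ℕ, 1 - q ^ (i + 1) ≠ 0) (hp : p ^ 4 = q) (hs : s ≠ 0) (hy : y ≠ 0) (n : ℕ) :
    y * ((1 - q ^ (n + 2)) *
        (p ^ (n + 2) ^ 2 * s ^ (n + 2) * ultraspherical q (s ^ 2) (n + 2) (s * y))) =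
      (1 - s ^ 2 * q ^ (n + 1)) * (p * (p ^ 2) ^ (n + 1) * (1 + s ^ 2 * y ^ 2) *
        (p ^ (n + 1) ^ 2 * s ^ (n + 1) * ultraspherical q (s ^ 2) (n + 1) (s * y))) -
      y * (s ^ 2 * q ^ (n + 1) * (1 - (s ^ 2) ^ 2 * q ^ n) *
        (p ^ n ^ 2 * s ^ n * ultraspherical q (s ^ 2) n (s * y))) := by
  have hc := mul_inv_cancel₀ (mul_ne_zero hs hy)
  have h := ultraspherical_pieri (t := s ^ 2) hq (mul_ne_zero hs hy) n
  have e : p ^ (n + 2) ^ 2 = p ^ n ^ 2 * q ^ (n + 1) := by rw [← hp]; ring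
  have e' : p * (p ^ 2) ^ (n + 1) * p ^ (n + 1) ^ 2 = p ^ n ^ 2 * q ^ (n + 1) := by rw [← hp]; ring
  rw [e]
  linear_combination y * p ^ n ^ 2 * q ^ (n + 1) * s ^ (n + 2) * h +
    p ^ n ^ 2 * q ^ (n + 1) * s ^ (n + 1) * (1 - s ^ 2 * q ^ (n + 1)) *
      ultraspherical q (s ^ 2) (n + 1) (s * y) * hc -
    (1 - s ^ 2 * q ^ (n + 1)) * (1 + s ^ 2 * y ^ 2) * s ^ (n + 1) *
      ultraspherical q (s ^ 2) (n + 1) (s * y) * e'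

lemma gaussAverage_ultraspherical_mul_ultraspherical (hq0 : 0 < q) (hq1 : q < 1) (hs0 : s ≠ 0)
    (hs1 : ‖s ^ 2‖ < 1) (m n : ℕ) :
    gaussAverage q (s ^ 2) (fun x ↦
        ultraspherical (q : ℂ) (s ^ 2) m x * ultraspherical (q : ℂ) (s ^ 2) n x) =
      √√q ^ n ^ 2 * s ^ n * ultraspherical (q : ℂ) (s ^ 2) n (s * √q ^ m) *
        gaussAverage q (s ^ 2) (ultraspherical (q : ℂ) (s ^ 2) m) := by
  have hq := one_sub_pow_succ_ne_zero hq0 hq1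
  have hr : (√√q : ℂ) ^ 2 = √q := ofReal_sqrt_sq (Real.sqrt_nonneg q)
  have hy : (√q : ℂ) ^ m ≠ 0 := pow_ne_zero m (by exact_mod_cast (Real.sqrt_pos.2 hq0).ne')
  have hy2 : ((√q : ℂ) ^ m) ^ 2 = q ^ m := by rw [pow_right_comm, ofReal_sqrt_sq hq0.le]
  have hraise := sqrt_pow_mul_gaussAverage_ultraspherical_mul_raised hq0 hq1 hs1 m
  induction n using Nat.twoStepInduction with
  | zero => simp [ultraspherical_zero]
  | one =>
    have h := hraise 0
    have hc := mul_inv_cancel₀ (mul_ne_zero hs0 hy)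
    simp only [ultraspherical_zero, mul_one] at h
    set G := gaussAverage q (s ^ 2) (ultraspherical (q : ℂ) (s ^ 2) m)
    refine mul_left_cancel₀ (mul_ne_zero hy (hq 0)) ?_
    linear_combination √q ^ m * one_sub_mul_gaussAverage_ultraspherical_mul_one
        (t := s ^ 2) hq0 hq1 m + (1 - s ^ 2) * h -
      √√q * s * √q ^ m * G *
        one_sub_mul_ultraspherical_one (t := s ^ 2) (X := s * √q ^ m) hq -
      (1 - s ^ 2) * √√q * G * hc - s ^ 2 * (1 - s ^ 2) * √√q * G * hy2
  | more n ih₀ ih₁ =>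
    have hp : (√√q : ℂ) ^ 4 = q := by rw [← ofReal_sqrt_sq hq0.le, ← hr, ← pow_mul]
    have hG := gaussian_mul_ultraspherical_succ_succ hq hp hs0 hy n
    have h := hraise (n + 1)
    rw [ih₁] at h
    have hE := gaussAverage_ultraspherical_mul_succ_succ hq0 hq1 hs1 m n
    rw [ih₀] at hE
    rw [hr, hy2] at hG
    refine mul_left_cancel₀ (mul_ne_zero hy (hq (n + 1))) ?_
    linear_combination √q ^ m * hE + (1 - s ^ 2 * q ^ (n + 1)) * h -
      gaussAverage q (s ^ 2) (ultraspherical (q : ℂ) (s ^ 2) m) * hG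

lemma gaussAverage_ultraspherical (hq0 : 0 < q) (hq1 : q < 1) (hs0 : s ≠ 0) (hs1 : ‖s ^ 2‖ < 1)
    (m : ℕ) :
    gaussAverage q (s ^ 2) (ultraspherical (q : ℂ) (s ^ 2) m) =
      √√q ^ m ^ 2 * s ^ m * ultraspherical (q : ℂ) (s ^ 2) m s *
        gaussAverage q (s ^ 2) fun _ ↦ 1 := by
  have h := gaussAverage_ultraspherical_mul_ultraspherical hq0 hq1 hs0 hs1 0 m
  have h₀ : ultraspherical (q : ℂ) (s ^ 2) 0 = fun _ ↦ 1 := funext fun _ ↦ ultraspherical_zero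
  simpa only [h₀, one_mul, pow_zero, mul_one] using h

end Recurrence

section Rogers

variable {q : ℝ} {s : ℂ}

lemma gaussAverage_rogersA1_mul_rogersA1 (hq0 : 0 < q) (hq1 : q < 1) (hs0 : s ≠ 0) (hs1 : ‖s‖ < 1)
    (m n : ℕ) :
    gaussAverage q (s ^ 2) (fun x ↦ RogersA1 q (s ^ 2) m x * RogersA1 q (s ^ 2) n x) =
      √√q ^ (m ^ 2 + n ^ 2) * s ^ (m + n) * RogersA1 q (s ^ 2) n (s * √q ^ m) *
        RogersA1 q (s ^ 2) m s * gaussAverage q (s ^ 2) fun _ ↦ 1 := by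
  have hs2 : ‖s ^ 2‖ < 1 := by simpa using norm_sq_mul_lt_one hs1 norm_one.le
  have hq := one_sub_pow_succ_ne_zero hq0 hq1
  have ht := one_sub_mul_pow_ne_zero (norm_ofReal_lt_one hq0 hq1).le hs2
  have hr : (√q : ℂ) ≠ 0 := by exact_mod_cast (Real.sqrt_pos.2 hq0).ne'
  have hP (k : ℕ) {x : ℂ} (hx : x ≠ 0) := rogersA1_mul_rogersWeight hq ht hx k
  have hE := gaussAverage_ultraspherical_mul_ultraspherical hq0 hq1 hs0 hs2 m n
  rw [gaussAverage_ultraspherical hq0 hq1 hs0 hs2, ← hP m hs0,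
    ← hP n (mul_ne_zero hs0 (pow_ne_zero m hr))] at hE
  refine mul_left_cancel₀ (mul_ne_zero (rogersWeight_ne_zero hq ht m)
    (rogersWeight_ne_zero hq ht n)) ?_
  rw [← gaussAverage_const_mul, gaussAverage_congr (g := fun x ↦
    ultraspherical (q : ℂ) (s ^ 2) m x * ultraspherical (q : ℂ) (s ^ 2) n x), hE]
  · ring
  · intro x hx
    have hx0 := ne_zero_of_mem_sphere_zero_one hx
    simp only [← hP m hx0, ← hP n hx0]
    ring

lemma gaussAverage_eq_intervalIntegral (t : ℂ) (f : ℂ → ℂ) :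
    gaussAverage q t f = 1 / (2 * (Real.pi : ℂ)) * ∫ φ : ℝ in (0 : ℝ)..(2 * Real.pi),
      f (Complex.exp (Complex.I * φ)) * thetaA1 q (Complex.exp (Complex.I * φ)) *
        muA1 q t (Complex.exp (Complex.I * φ)) := by
  simp [gaussAverage, Real.circleAverage, circleMap_zero, mul_comm Complex.I]

theorem rogersA1_qGauss_integral_general (q : ℝ) (s : ℂ) (hq0 : 0 < q) (hq1 : q < 1)
    (hs0 : s ≠ 0) (hs1 : ‖s‖ < 1) (m n : ℕ) :
    (1 / (2 * (Real.pi : ℂ))) *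
      ∫ φ : ℝ in (0:ℝ)..(2 * Real.pi),
        RogersA1 q (s ^ 2) m (Complex.exp (Complex.I * (φ : ℂ))) *
          RogersA1 q (s ^ 2) n (Complex.exp (Complex.I * (φ : ℂ))) *
          thetaA1 q (Complex.exp (Complex.I * (φ : ℂ))) *
          muA1 q (s ^ 2) (Complex.exp (Complex.I * (φ : ℂ))) =
    ((q ^ (((m : ℝ) ^ 2 + (n : ℝ) ^ 2) / 4) : ℝ) : ℂ) * s ^ (m + n) *
      RogersA1 q (s ^ 2) n (s * ((q ^ ((m : ℝ) / 2) : ℝ) : ℂ)) *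
      RogersA1 q (s ^ 2) m s *
      ∏' j : ℕ, (1 - s ^ 2 * (q : ℂ) ^ (j + 1)) / (1 - (s ^ 2) ^ 2 * (q : ℂ) ^ (j + 1)) := by
  have hq := norm_ofReal_lt_one hq0 hq1
  have hs2 : ‖s ^ 2‖ < 1 := by simpa using norm_sq_mul_lt_one hs1 norm_one.le
  have hp : q ^ (((m : ℝ) ^ 2 + (n : ℝ) ^ 2) / 4) = √√q ^ (m ^ 2 + n ^ 2) := by
    have h := rpow_intCast_div_four hq0.le ((m ^ 2 + n ^ 2 : ℕ) : ℤ)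
    rw [zpow_natCast] at h
    rw [← h]
    push_cast
    rfl
  have hr : q ^ ((m : ℝ) / 2) = √q ^ m := by
    rw [Real.sqrt_eq_rpow, ← Real.rpow_mul_natCast hq0.le, one_div_mul_eq_div]
  rw [← gaussAverage_eq_intervalIntegral _ fun x ↦ RogersA1 q (s ^ 2) m x * RogersA1 q (s ^ 2) n x,
    gaussAverage_rogersA1_mul_rogersA1 hq0 hq1 hs0 hs1, gaussAverage_one hq0 hq1 hs2,
    tprod_one_sub_div_one_sub hq (norm_sq_mul_lt_one hs2 hq.le), hp, hr,
    Complex.ofReal_pow, Complex.ofReal_pow]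

end Rogers

/-- the q-Gauss integral formula for Rogers polynomials of type A₁. -/
theorem rogersA1_qGauss_integral (q s : ℝ) (hq0 : 0 < q) (hq1 : q < 1)
    (hs0 : 0 < s) (hs1 : s < 1) (m n : ℕ) :
    (1 / (2 * (Real.pi : ℂ))) *
      ∫ φ : ℝ in (0:ℝ)..(2 * Real.pi),
        RogersA1 q ((s : ℂ) ^ 2) m (Complex.exp (Complex.I * (φ : ℂ))) *
          RogersA1 q ((s : ℂ) ^ 2) n (Complex.exp (Complex.I * (φ : ℂ))) *
          thetaA1 q (Complex.exp (Complex.I * (φ : ℂ))) *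
          muA1 q ((s : ℂ) ^ 2) (Complex.exp (Complex.I * (φ : ℂ))) =
    ((q ^ (((m : ℝ) ^ 2 + (n : ℝ) ^ 2) / 4) : ℝ) : ℂ) * (s : ℂ) ^ (m + n) *
      RogersA1 q ((s : ℂ) ^ 2) n ((s : ℂ) * ((q ^ ((m : ℝ) / 2) : ℝ) : ℂ)) *
      RogersA1 q ((s : ℂ) ^ 2) m (s : ℂ) *
      ∏' j : ℕ, (1 - (s : ℂ) ^ 2 * (q : ℂ) ^ (j + 1)) /
        (1 - ((s : ℂ) ^ 2) ^ 2 * (q : ℂ) ^ (j + 1)) :=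
  rogersA1_qGauss_integral_general q s hq0 hq1 (by exact_mod_cast hs0.ne')
    (norm_ofReal_lt_one hs0 hs1) m n

end
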